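/- Let X be a nonempty zero-dimensional dense-in-itself metric space and let F = (W, R, R_D) be a finite S4D-frame that is a T₁-frame and a DS-frame, such that W = R(w₀) for some point w₀ and R_D = (W × W) − {(w₀, w₀)}. Then there exists a cd-p-morphism from X onto F. -/

import Mathlib

/-!
The map is the limit of locally constant approximations. Fix a point `x₀` and put
`Q v u :↔ R v u ∧ u ≠ w₀`; by (DS) and reflexivity `Q` is serial, and by (T₁) it agrees
with `R` on `W \ {w₀}`.
Stage `n` consists of an open set `U n`, a labelling `f n` locally constant on `U n`, and a set
`A n ⊆ U n` of points, closed and discrete in `U n`, whose labels are final. At the start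
`U 0 = X`, `f 0 = w₀` and `A 0 = {x₀}`; then `U (n+1) = U n \ A n`.

In the step (`exists_relabel`), each `a ∈ A n` gets a small clopen neighbourhood, the
neighbourhoods being locally finite in `U (n+1)`. Minus `a`, it splits into clopen rings
shrinking to `a` (`exists_rings`), and the rings are labelled so that each `Q`-successor of
`f n a` occurs infinitely often. Points chosen in the rings (seeds) are put into `A (n+1)`, and
`exists_separated_net` enlarges `A (n+1)` to be `1/(n+1)`-dense in each label class of `U (n+1)`.

A point of `A n` keeps the label `f n`; a point lying in every `U n` receives a label that it
carries at infinitely many stages, which exists because `W` is finite. Labels only increase along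
`Q`, so each point has a neighbourhood with labels in `R (F x)`. Conversely the seeds put
every successor label near every point of `A n`, and the density of `A n` in label classes
transfers this to the remaining points. Only `x₀` is labelled `w₀`, and `x₀` is an accumulation
point of every other fibre, so those fibres have more than one point.
-/

/-- Bimodal formulas: propositional letters, falsum, implication, box, and
the difference modality `[≠]` (called `dbox` here). -/
inductive BForm : Type
  | var : ℕ → BForm
  | bot : BForm
  | imp : BForm → BForm → BForm
  | box : BForm → BForm
  | dbox : BForm → BForm
  deriving DecidableEq

namespace BForm

/-- Classical negation. -/
def neg (A : BForm) : BForm := imp A bot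

/-- Classical conjunction. -/
def conj (A B : BForm) : BForm := neg (imp A (neg B))

/-- `◇A = ¬□¬A`. -/
def dia (A : BForm) : BForm := neg (box (neg A))

/-- `⟨≠⟩A = ¬[≠]¬A`. -/
def ddia (A : BForm) : BForm := neg (dbox (neg A))

end BForm

/-- Truth at a point of a Kripke model over a frame `(W, R, R_D)`. -/
def ksat {W : Type} (R RD : W → W → Prop) (θ : ℕ → Set W) : W → BForm → Prop
  | x, .var n => x ∈ θ n
  | _, .bot => False
  | x, .imp A B => ksat R RD θ x A → ksat R RD θ x B
  | x, .box A => ∀ y, R x y → ksat R RD θ y A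
  | x, .dbox A => ∀ y, RD x y → ksat R RD θ y A

/-- Validity in a Kripke frame: truth at every point under every valuation. -/
def kvalid {W : Type} (R RD : W → W → Prop) (A : BForm) : Prop :=
  ∀ (θ : ℕ → Set W) (x : W), ksat R RD θ x A

/-- Truth at a point of a topological model. -/
def tsat {X : Type} [TopologicalSpace X] (θ : ℕ → Set X) : X → BForm → Prop
  | x, .var n => x ∈ θ n
  | _, .bot => False
  | x, .imp A B => tsat θ x A → tsat θ x B
  | x, .box A => ∃ U : Set X, IsOpen U ∧ x ∈ U ∧ ∀ y ∈ U, tsat θ y A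
  | x, .dbox A => ∀ y, y ≠ x → tsat θ y A

/-- Validity in a topological space. -/
def tvalid (X : Type) [TopologicalSpace X] (A : BForm) : Prop :=
  ∀ (θ : ℕ → Set X) (x : X), tsat θ x A

/-- Uniform substitution of formulas for propositional letters. -/
def substF (σ : ℕ → BForm) : BForm → BForm
  | .var n => σ n
  | .bot => .bot
  | .imp A B => .imp (substF σ A) (substF σ B)
  | .box A => .box (substF σ A)
  | .dbox A => .dbox (substF σ A)

/-- Boolean evaluation of a formula, treating letters and modal formulas as atoms. -/
def beval (v : BForm → Bool) : BForm → Bool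
  | .var n => v (.var n)
  | .bot => false
  | .imp A B => !(beval v A) || beval v B
  | .box A => v (.box A)
  | .dbox A => v (.dbox A)

/-- A classical tautology of the bimodal language. -/
def Tautology (A : BForm) : Prop := ∀ v : BForm → Bool, beval v A = true

/-- The letter `p`. -/
def pLet : BForm := .var 0
/-- The letter `q`. -/
def qLet : BForm := .var 1

/-- The least bimodal logic containing `K₂`, the S4D axioms and the extra axioms `Ax`,
closed under modus ponens, uniform substitution, and both necessitation rules. -/
inductive Logic (Ax : Set BForm) : BForm → Prop
  | taut {A : BForm} : Tautology A → Logic Ax A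
  | axKBox : Logic Ax (.imp (.box (.imp pLet qLet)) (.imp (.box pLet) (.box qLet)))
  | axKD : Logic Ax (.imp (.dbox (.imp pLet qLet)) (.imp (.dbox pLet) (.dbox qLet)))
  | axBD : Logic Ax (.imp pLet (.dbox (BForm.ddia pLet)))
  | ax4mD : Logic Ax (.imp (BForm.conj pLet (.dbox pLet)) (.dbox (.dbox pLet)))
  | axTBox : Logic Ax (.imp (.box pLet) pLet)
  | ax4Box : Logic Ax (.imp (.box pLet) (.box (.box pLet)))
  | axDBox : Logic Ax (.imp (BForm.conj (.dbox pLet) pLet) (.box pLet))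
  | extra {A : BForm} : A ∈ Ax → Logic Ax A
  | mp {A B : BForm} : Logic Ax (.imp A B) → Logic Ax A → Logic Ax B
  | subst {A : BForm} (σ : ℕ → BForm) : Logic Ax A → Logic Ax (substF σ A)
  | necBox {A : BForm} : Logic Ax A → Logic Ax (.box A)
  | necD {A : BForm} : Logic Ax A → Logic Ax (.dbox A)

/-- The axiom (DS): `[≠]p → ◇p`. -/
def dsAx : BForm := .imp (.dbox pLet) (BForm.dia pLet)

/-- The axiom (AT₁): `[≠]p → [≠]□p`. -/
def at1Ax : BForm := .imp (.dbox pLet) (.dbox (.box pLet))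

/-- The logic S4D. -/
def S4D : BForm → Prop := Logic ∅

/-- The logic S4DS = S4D + (DS). -/
def S4DS : BForm → Prop := Logic {dsAx}

/-- The logic S4DT1S = S4DS + (AT₁). -/
def S4DT1S : BForm → Prop := Logic {dsAx, at1Ax}

/-- `(W, R, R_D)` is an S4D-frame: `R` is reflexive and transitive, `R_D` is
symmetric and pseudo-transitive, and `R ⊆ R_D ∪ Id`. -/
structure IsS4DFrame {W : Type} (R RD : W → W → Prop) : Prop where
  refl : ∀ x, R x x
  trans : ∀ ⦃x y z⦄, R x y → R y z → R x z
  symm : ∀ ⦃x y⦄, RD x y → RD y x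
  ptrans : ∀ ⦃x y z⦄, RD x y → RD y z → x ≠ z → RD x z
  inc : ∀ ⦃x y⦄, R x y → RD x y ∨ x = y

/-- A T₁-frame: every `R_D`-irreflexive point is `R`-minimal. -/
def IsT1Frame {W : Type} (R RD : W → W → Prop) : Prop :=
  ∀ x, ¬ RD x x → ∀ y, R y x → y = x

/-- A DS-frame: every `R_D`-irreflexive point has an `R`-successor distinct from itself. -/
def IsDSFrame {W : Type} (R RD : W → W → Prop) : Prop :=
  ∀ x, ¬ RD x x → ∃ y, y ≠ x ∧ R x y

/-- A cd-p-morphism from a topological space `X` onto a Kripke frame `(W, R, R_D)`. -/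
structure IsCdPMorphism {X : Type} [TopologicalSpace X] {W : Type}
    (R RD : W → W → Prop) (f : X → W) : Prop where
  surj : Function.Surjective f
  cl : ∀ w : W, closure (f ⁻¹' {w}) = f ⁻¹' {v | R v w}
  diff : ∀ w : W, {x : X | ∃ y, y ≠ x ∧ f y = w} = f ⁻¹' {v | RD v w}

/-- A p-morphism between Kripke frames. -/
structure IsPMorphism {W W' : Type} (R RD : W → W → Prop) (R' RD' : W' → W' → Prop)
    (f : W → W') : Prop where
  surj : Function.Surjective f
  forth : ∀ ⦃x y⦄, R x y → R' (f x) (f y)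
  forthD : ∀ ⦃x y⦄, RD x y → RD' (f x) (f y)
  back : ∀ x z, R' (f x) z → ∃ y, R x y ∧ f y = z
  backD : ∀ x z, RD' (f x) z → ∃ y, RD x y ∧ f y = z

/-- The Alexandrov topology on `W` whose open sets are the `R`-upward-closed sets. -/
def alexandrov {W : Type} (R : W → W → Prop) : TopologicalSpace W where
  IsOpen U := ∀ ⦃x⦄, x ∈ U → ∀ ⦃y⦄, R x y → y ∈ U
  isOpen_univ := fun _ _ _ _ => trivial
  isOpen_inter := fun _ _ hU hV x hx y hxy => ⟨hU hx.1 hxy, hV hx.2 hxy⟩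
  isOpen_sUnion := fun _ hS x hx y hxy => by
    obtain ⟨U, hU, hxU⟩ := hx
    exact ⟨U, hU, hS U hU hxU hxy⟩

open Topology Filter Set

/-! ### Locally constant labels and discrete closed sets -/

/-- `S` has no accumulation point in `U`; for `S ⊆ U`, this says that `S` is closed and discrete
in `U`. -/
def NoAcc {X : Type} [TopologicalSpace X] (S U : Set X) : Prop :=
  ∀ x ∈ U, ∀ᶠ y in 𝓝 x, y ∈ S → y = x

/-- `f` is locally constant at the points of `U`. -/
def LocConst {X Y : Type} [TopologicalSpace X] (f : X → Y) (U : Set X) : Prop :=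
  ∀ x ∈ U, ∀ᶠ y in 𝓝 x, f y = f x

theorem NoAcc.isOpen_diff {X : Type} [TopologicalSpace X] {S U : Set X} (hU : IsOpen U)
    (h : NoAcc S U) : IsOpen (U \ S) := by
  rw [isOpen_iff_mem_nhds]
  rintro x ⟨hx, hxS⟩
  filter_upwards [hU.mem_nhds hx, h x hx] with y hy hyS
  exact ⟨hy, fun hS => hxS (hyS hS ▸ hS)⟩

theorem NoAcc.union {X : Type} [TopologicalSpace X] {S T U : Set X}
    (hS : NoAcc S U) (hT : NoAcc T U) : NoAcc (S ∪ T) U := by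
  intro x hx
  filter_upwards [hS x hx, hT x hx] with y h1 h2 h
  exact h.elim h1 h2

/-! ### Rings and nets -/

/-- A punctured clopen neighbourhood of `a` splits into nonempty clopen rings shrinking to `a`:
`g` is the ring number on `N \ {a}`, and `s n` is a point chosen in ring `n`. -/
theorem exists_rings {X : Type} [MetricSpace X]
    (hzero : TopologicalSpace.IsTopologicalBasis {s : Set X | IsClopen s})
    (hdii : ∀ x : X, ¬ IsOpen ({x} : Set X)) (a : X) (r : ℝ) (hr : 0 < r) :
    ∃ (N : Set X) (g : X → ℕ) (s : ℕ → X), IsClopen N ∧ a ∈ N ∧ N ⊆ Metric.ball a r ∧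
      LocConst g {a}ᶜ ∧ (∀ n, s n ∈ N ∧ s n ≠ a ∧ g (s n) = n) ∧
      Tendsto s atTop (𝓝 a) := by
  have base : ∀ V ∈ 𝓝 a, ∃ N : Set X, IsClopen N ∧ a ∈ N ∧ N ⊆ V := fun V hV => by
    obtain ⟨N, h1, h2, h3⟩ := hzero.mem_nhds_iff.1 hV
    exact ⟨N, h1, h2, h3⟩
  have step : ∀ (n : ℕ) (N : {N : Set X // IsClopen N ∧ a ∈ N}),
      ∃ N' : {N : Set X // IsClopen N ∧ a ∈ N}, N'.1 ⊆ N.1 ∧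
        N'.1 ⊆ Metric.ball a (1 / ((n : ℝ) + 1)) ∧ ∃ s ∈ N.1, s ∉ N'.1 := by
    rintro n ⟨N, hN, haN⟩
    obtain ⟨s, hs, hsa⟩ : ∃ s ∈ N, s ≠ a := by
      by_contra! h
      apply hdii a
      have : N = {a} := Set.eq_singleton_iff_unique_mem.2 ⟨haN, h⟩
      exact this ▸ hN.isOpen
    obtain ⟨N', h1, h2, h3⟩ := base (N ∩ Metric.ball a (1 / ((n : ℝ) + 1)) ∩ {s}ᶜ)
      (inter_mem (inter_mem (hN.isOpen.mem_nhds haN) (Metric.ball_mem_nhds a (by positivity)))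
        (isOpen_compl_singleton.mem_nhds hsa.symm))
    exact ⟨⟨N', h1, h2⟩, fun y hy => (h3 hy).1.1, fun y hy => (h3 hy).1.2, s, hs,
      fun h => (h3 h).2 rfl⟩
  obtain ⟨N0, h01, h02, h03⟩ := base _ (Metric.ball_mem_nhds a hr)
  choose nx hsub hball s0 hs0 hs0' using step
  let M : ℕ → {N : Set X // IsClopen N ∧ a ∈ N} :=
    fun n => Nat.rec ⟨N0, h01, h02⟩ nx n
  have hanti : Antitone fun n => (M n).1 := antitone_nat_of_succ_le fun n => hsub n (M n)
  let g : X → ℕ := fun x => sInf {n | x ∉ (M (n + 1)).1}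
  have hg : ∀ x n, (∀ i < n, x ∈ (M (i + 1)).1) → x ∉ (M (n + 1)).1 → g x = n := by
    intro x n h1 h2
    refine IsLeast.csInf_eq ⟨h2, fun m hm => ?_⟩
    by_contra! h
    exact hm (h1 m h)
  refine ⟨N0, g, fun n => s0 n (M n), h01, h02, h03, ?_, ?_, ?_⟩
  · intro x hx
    have hne : {n | x ∉ (M (n + 1)).1}.Nonempty := by
      obtain ⟨n, hn⟩ := exists_nat_one_div_lt (dist_pos.2 hx)
      refine ⟨n, fun h => ?_⟩
      have := hball n (M n) h
      rw [Metric.mem_ball] at this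
      linarith
    have h1 : x ∉ (M (g x + 1)).1 := Nat.sInf_mem hne
    have h2 : ∀ i < g x, x ∈ (M (i + 1)).1 := fun i hi => by
      have := Nat.notMem_of_lt_sInf hi
      simpa using this
    have h3 : ∀ᶠ y in 𝓝 x, ∀ i ∈ Set.Iio (g x), y ∈ (M (i + 1)).1 :=
      (eventually_all_finite (Set.finite_Iio (g x))).2 fun i hi =>
        (M (i + 1)).2.1.isOpen.mem_nhds (h2 i hi)
    filter_upwards [h3, (M (g x + 1)).2.1.compl.isOpen.mem_nhds h1] with y h4 h5
    exact hg y _ h4 h5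
  · intro n
    refine ⟨hanti (Nat.zero_le n) (hs0 n (M n)), fun h => ?_, ?_⟩
    · have h' : s0 n (M n) = a := h
      apply hs0' n (M n)
      rw [h']
      exact (nx n (M n)).2.2
    · exact hg _ _ (fun i hi => hanti (Nat.succ_le_of_lt hi) (hs0 n (M n))) (hs0' n (M n))
  · rw [← tendsto_add_atTop_iff_nat 1, tendsto_iff_dist_tendsto_zero]
    refine squeeze_zero (fun _ => dist_nonneg) (fun n => ?_)
      (tendsto_one_div_add_atTop_nhds_zero_nat (𝕜 := ℝ))
    have := hball n (M n) (hs0 (n + 1) (M (n + 1)))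
    exact (Metric.mem_ball.1 this).le

/-- A maximal set that is `ε`-separated within each label class. It has no accumulation point
in `U` because the labelling is locally constant there. -/
theorem exists_separated_net {X W : Type} [MetricSpace X] (f : X → W) (U : Set X)
    (hf : LocConst f U) (ε : ℝ) (hε : 0 < ε) :
    ∃ M ⊆ U, NoAcc M U ∧ ∀ x ∈ U, ∃ a ∈ M, f a = f x ∧ dist a x < ε := by
  let P : Set (Set X) := {M | M ⊆ U ∧ ∀ x ∈ M, ∀ y ∈ M, f x = f y → dist x y < ε → x = y}
  obtain ⟨M, hM⟩ : ∃ M, Maximal (· ∈ P) M := by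
    apply zorn_subset
    intro c hc hch
    refine ⟨⋃₀ c, ⟨sUnion_subset fun s hs => (hc hs).1, ?_⟩, fun s hs => subset_sUnion_of_mem hs⟩
    rintro x ⟨s, hs, hxs⟩ y ⟨t, ht, hyt⟩
    rcases hch.total hs ht with h | h
    · exact (hc ht).2 x (h hxs) y hyt
    · exact (hc hs).2 x hxs y (h hyt)
  refine ⟨M, hM.prop.1, fun x hx => ?_, fun x hx => ?_⟩
  · have h1 : ∀ᶠ y in 𝓝 x, f y = f x ∧ dist y x < ε / 2 :=
      (hf x hx).and (Metric.ball_mem_nhds x (by positivity))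
    -- At most one point of `M` other than `x` lies in the neighbourhood given by `h1`.
    by_cases hp : ∃ p ∈ M, p ≠ x ∧ f p = f x ∧ dist p x < ε / 2
    · obtain ⟨p, hpM, hpx, hpf, hpd⟩ := hp
      filter_upwards [h1, isOpen_compl_singleton.mem_nhds hpx.symm] with y hy hyp hyM
      refine absurd (hM.prop.2 y hyM p hpM (hy.1.trans hpf.symm) ?_) hyp
      linarith [dist_triangle_right y p x, hy.2]
    · filter_upwards [h1] with y hy hyM
      by_contra h
      exact hp ⟨y, hyM, h, hy⟩
  · by_contra! h
    have hxM : x ∉ M := fun hxM => by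
      have := h x hxM rfl
      simp at this
      linarith
    have : insert x M ∈ P := by
      refine ⟨insert_subset hx hM.prop.1, ?_⟩
      rintro y (rfl | hy) z (rfl | hz) hyz hd
      · rfl
      · have := h z hz hyz.symm
        rw [dist_comm] at this
        linarith
      · have := h y hy hyz
        linarith
      · exact hM.prop.2 y hy z hz hyz hd
    exact hxM (hM.le_of_ge this (subset_insert x M) (mem_insert x M))

/-! ### Passing from one stage to the next -/

/-- In a countable `W`, the successors of every `v` under a serial relation can be listed with
infinite repetition. -/
theorem exists_listing {W : Type} [Countable W] (Q : W → W → Prop) (hQ : ∀ v, ∃ u, Q v u) :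
    ∃ e : W → ℕ → W, (∀ v n, Q v (e v n)) ∧
      ∀ v u, Q v u → ∀ m, ∃ n ≥ m, e v n = u := by
  have : ∀ v, ∃ e : ℕ → {u // Q v u}, Function.Surjective e := fun v =>
    haveI : Nonempty {u // Q v u} := let ⟨u, hu⟩ := hQ v; ⟨⟨u, hu⟩⟩
    exists_surjective_nat _
  choose e he using this
  refine ⟨fun v n => (e v n.unpair.1).1, fun v n => (e v _).2, fun v u hu m => ?_⟩
  obtain ⟨k, hk⟩ := he v ⟨u, hu⟩
  exact ⟨Nat.pair k m, Nat.right_le_pair k m, by simp [hk]⟩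

/-- The labels on `U \ A` are changed to `Q`-successors so that every `Q`-successor of the label
of a point `a ∈ A` occurs on a set of seeds accumulating at `a`. -/
theorem exists_relabel {X W : Type} [MetricSpace X] [Countable W]
    (hzero : TopologicalSpace.IsTopologicalBasis {s : Set X | IsClopen s})
    (hdii : ∀ x : X, ¬ IsOpen ({x} : Set X))
    (Q : W → W → Prop) (hQ : ∀ v, ∃ u, Q v u) (U A : Set X) (f : X → W)
    (hU : IsOpen U) (hAU : A ⊆ U) (hA : NoAcc A U) (hf : LocConst f U) :
    ∃ (f' : X → W) (S : Set X), LocConst f' (U \ A) ∧ (∀ x, Q (f x) (f' x)) ∧ S ⊆ U \ A ∧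
      NoAcc S (U \ A) ∧ ∀ a ∈ A, ∀ u, Q (f a) u → a ∈ closure (S ∩ f' ⁻¹' {u}) := by
  classical
  obtain ⟨e, he, he'⟩ := exists_listing Q hQ
  have hrad : ∀ a : X, ∃ r : ℝ, 0 < r ∧ (a ∈ A → Metric.ball a r ⊆ U ∧
      (∀ y ∈ Metric.ball a r, f y = f a) ∧ ∀ b ∈ A, b ≠ a → 4 * r ≤ dist b a) := by
    intro a
    by_cases ha : a ∈ A
    · obtain ⟨ε, hε, h⟩ := Metric.eventually_nhds_iff.1
        (((hA a (hAU ha)).and (hf a (hAU ha))).and (hU.mem_nhds (hAU ha)))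
      refine ⟨ε / 4, by positivity, fun _ => ⟨fun y hy => (h ?_).2, fun y hy => (h ?_).1.2,
        fun b hb hba => ?_⟩⟩
      · rw [Metric.mem_ball] at hy; linarith
      · rw [Metric.mem_ball] at hy; linarith
      · by_contra! hlt
        exact hba ((h (by linarith)).1.1 hb)
    · exact ⟨1, one_pos, fun h => absurd h ha⟩
  choose r hr hrA using hrad
  choose N g s hN haN hNr hg hs hst using fun a => exists_rings hzero hdii a (r a) (hr a)
  have hNU : ∀ a ∈ A, N a ⊆ U := fun a ha => (hNr a).trans (hrA a ha).1
  have hNf : ∀ a ∈ A, ∀ y ∈ N a, f y = f a := fun a ha y hy => (hrA a ha).2.1 y (hNr a hy)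
  -- If a `δ`-ball around `x` meets two of the neighbourhoods, then the larger of their radii is
  -- below `δ`, so that `A` has a point within `2 * δ` of `x`.
  have hclose : ∀ x δ, ∀ a ∈ A, ∀ b ∈ A, ∀ y ∈ N a, ∀ z ∈ N b, dist y x < δ → dist z x < δ →
      a ≠ b → ∃ c ∈ A, dist c x < 2 * δ := by
    intro x δ a ha b hb y hy z hz hyx hzx hab
    have h1 := Metric.mem_ball.1 (hNr a hy)
    have h2 := Metric.mem_ball.1 (hNr b hz)
    have h3 := (hrA a ha).2.2 b hb hab.symm
    have h4 := (hrA b hb).2.2 a ha hab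
    have h5 := dist_triangle4 a y z b
    have h6 := dist_triangle_right y z x
    have h7 := dist_triangle_left a x y
    have h8 := dist_triangle_left b x z
    rw [dist_comm b a] at h3
    rw [dist_comm a y] at h5
    rcases le_total (r a) (r b) with h | h
    · exact ⟨b, hb, by linarith⟩
    · exact ⟨a, ha, by linarith⟩
  have hdisj : ∀ a ∈ A, ∀ b ∈ A, ∀ y ∈ N a, y ∈ N b → a = b := by
    intro a ha b hb y hya hyb
    by_contra hab
    have h1 := Metric.mem_ball.1 (hNr a hya)
    have h2 := Metric.mem_ball.1 (hNr b hyb)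
    have h3 := (hrA a ha).2.2 b hb (Ne.symm hab)
    have h4 := (hrA b hb).2.2 a ha hab
    have h5 := dist_triangle_left a b y
    rw [dist_comm b a] at h3
    linarith [hr a, hr b]
  have hout : ∀ x ∈ U \ A, (∀ a ∈ A, x ∉ N a) → ∀ᶠ y in 𝓝 x, ∀ a ∈ A, y ∉ N a := by
    rintro x ⟨hxU, hxA⟩ hx
    obtain ⟨ε, hε, h⟩ := Metric.eventually_nhds_iff.1 (hA x hxU)
    have hno : ∀ c ∈ A, ¬ dist c x < 2 * (ε / 2) := fun c hc hd =>
      hxA (h (by linarith) hc ▸ hc)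
    have hball : Metric.ball x (ε / 2) ∈ 𝓝 x := Metric.ball_mem_nhds x (by positivity)
    by_cases hp : ∃ b ∈ A, ∃ z ∈ N b, dist z x < ε / 2
    · obtain ⟨b, hb, z, hz, hzx⟩ := hp
      filter_upwards [hball, (hN b).compl.isOpen.mem_nhds (hx b hb)] with y hy hyb a ha hya
      have hab : a ≠ b := fun hab => hyb (hab ▸ hya)
      obtain ⟨c, hc, hcx⟩ := hclose x (ε / 2) a ha b hb y hya z hz hy hzx hab
      exact hno c hc hcx
    · filter_upwards [hball] with y hy a ha hya
      exact hp ⟨a, ha, y, hya, hy⟩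
  let G : X → ℕ := fun x => if h : ∃ a ∈ A, x ∈ N a then g h.choose x else 0
  have hG : ∀ a ∈ A, ∀ x ∈ N a, G x = g a x := by
    intro a ha x hx
    have h : ∃ a ∈ A, x ∈ N a := ⟨a, ha, hx⟩
    have : h.choose = a := hdisj _ h.choose_spec.1 a ha x h.choose_spec.2 hx
    simp only [G, dif_pos h, this]
  have hG0 : ∀ x, (∀ a ∈ A, x ∉ N a) → G x = 0 := by
    intro x hx
    have h : ¬ ∃ a ∈ A, x ∈ N a := by simpa using hx
    simp only [G, dif_neg h]
  have hGloc : LocConst G (U \ A) := by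
    intro x hx
    by_cases hxN : ∃ a ∈ A, x ∈ N a
    · obtain ⟨a, ha, hxa⟩ := hxN
      have hne : x ≠ a := fun h => hx.2 (h ▸ ha)
      filter_upwards [hg a x hne, (hN a).isOpen.mem_nhds hxa] with y hy hya
      rw [hG a ha y hya, hG a ha x hxa, hy]
    · have hx0 : ∀ a ∈ A, x ∉ N a := by simpa using hxN
      filter_upwards [hout x hx hx0] with y hy
      rw [hG0 x hx0, hG0 y hy]
  refine ⟨fun x => e (f x) (G x), {y | ∃ a ∈ A, ∃ n, y = s a n}, ?_, fun x => he _ _, ?_, ?_, ?_⟩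
  · intro x hx
    filter_upwards [hf x hx.1, hGloc x hx] with y h1 h2
    rw [h1, h2]
  · rintro y ⟨a, ha, n, rfl⟩
    refine ⟨hNU a ha (hs a n).1, fun h => ?_⟩
    exact (hs a n).2.1 (hdisj _ h a ha _ (haN _) (hs a n).1)
  · intro x hx
    by_cases hxN : ∃ a ∈ A, x ∈ N a
    · obtain ⟨a, ha, hxa⟩ := hxN
      have hne : x ≠ a := fun h => hx.2 (h ▸ ha)
      -- The only seed in the ring of `x` is `s a (g a x)`.
      have h1 : ∀ᶠ y in 𝓝 x, y ∈ {y | ∃ a ∈ A, ∃ n, y = s a n} → y = s a (g a x) := by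
        filter_upwards [hg a x hne, (hN a).isOpen.mem_nhds hxa] with y hy hya
        rintro ⟨b, hb, n, rfl⟩
        obtain rfl := hdisj b hb a ha _ (hs b n).1 hya
        rw [← hy, (hs b n).2.2]
      by_cases hp : s a (g a x) = x
      · rwa [hp] at h1
      · filter_upwards [h1, isOpen_compl_singleton.mem_nhds (Ne.symm hp)] with y hy hyp hyS
        exact absurd (hy hyS) hyp
    · have hx0 : ∀ a ∈ A, x ∉ N a := by simpa using hxN
      filter_upwards [hout x hx hx0] with y hy
      rintro ⟨b, hb, n, rfl⟩
      exact absurd (hs b n).1 (hy b hb)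
  · intro a ha u hu
    rw [mem_closure_iff_nhds]
    intro V hV
    obtain ⟨m, hm⟩ := eventually_atTop.1 ((hst a).eventually hV)
    obtain ⟨n, hn, hne⟩ := he' (f a) u hu m
    refine ⟨s a n, hm n hn, ⟨a, ha, n, rfl⟩, ?_⟩
    simp only [mem_preimage, mem_singleton_iff]
    rw [hNf a ha _ (hs a n).1, hG a ha _ (hs a n).1, (hs a n).2.2, hne]

/-- A stage of the construction: an open set `U`, a labelling `f` locally constant on `U`, and a
set `A`, closed and discrete in `U`, of points whose label is final. -/
structure Stage (X W : Type) [TopologicalSpace X] where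
  /-- The points not settled at earlier stages. -/
  U : Set X
  /-- The points settled at this stage. -/
  A : Set X
  /-- The current labels; only the values on `U` matter. -/
  f : X → W
  isOpen_U : IsOpen U
  subset : A ⊆ U
  noAcc : NoAcc A U
  locConst : LocConst f U

theorem Stage.exists_next {X W : Type} [MetricSpace X] [Countable W]
    (hzero : TopologicalSpace.IsTopologicalBasis {s : Set X | IsClopen s})
    (hdii : ∀ x : X, ¬ IsOpen ({x} : Set X))
    (Q : W → W → Prop) (hQ : ∀ v, ∃ u, Q v u) (n : ℕ) (σ : Stage X W) :
    ∃ τ : Stage X W, τ.U = σ.U \ σ.A ∧ (∀ x, Q (σ.f x) (τ.f x)) ∧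
      (∀ x ∈ τ.U, ∃ a ∈ τ.A, τ.f a = τ.f x ∧ dist a x < 1 / ((n : ℝ) + 1)) ∧
      ∀ a ∈ σ.A, ∀ u, Q (σ.f a) u → a ∈ closure (τ.A ∩ τ.f ⁻¹' {u}) := by
  obtain ⟨f', S, h1, h2, h3, h4, h5⟩ := exists_relabel hzero hdii Q hQ σ.U σ.A σ.f σ.isOpen_U
    σ.subset σ.noAcc σ.locConst
  obtain ⟨M, hM1, hM2, hM3⟩ := exists_separated_net f' (σ.U \ σ.A) h1 (1 / ((n : ℝ) + 1))
    (by positivity)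
  refine ⟨⟨σ.U \ σ.A, S ∪ M, f', σ.noAcc.isOpen_diff σ.isOpen_U, union_subset h3 hM1,
    h4.union hM2, h1⟩, rfl, h2, fun x hx => ?_, fun a ha u hu => ?_⟩
  · obtain ⟨a, ha, h⟩ := hM3 x hx
    exact ⟨a, Or.inr ha, h⟩
  · exact closure_mono (inter_subset_inter_left _ subset_union_left) (h5 a ha u hu)

/-! ### The limit labelling -/

/-- Case II of the main construction: if `X` is a nonempty
zero-dimensional dense-in-itself metric space and `F = (W, R, R_D)` is a finite
S4D-frame which is a T₁-frame and a DS-frame, rooted at `w₀` (with `W = R(w₀)`)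
and with `R_D = W × W − {(w₀, w₀)}`, then there is a cd-p-morphism from `X` onto
`F`. -/
theorem cd_p_morphism_onto_rooted_punctured_frame (X : Type) [MetricSpace X]
    [Nonempty X]
    (hzero : TopologicalSpace.IsTopologicalBasis {s : Set X | IsClopen s})
    (hdii : ∀ x : X, ¬ IsOpen ({x} : Set X))
    {W : Type} [Finite W] (R RD : W → W → Prop) (hF : IsS4DFrame R RD)
    (hT1 : IsT1Frame R RD) (hDS : IsDSFrame R RD)
    (w₀ : W) (hroot : ∀ w : W, R w₀ w)
    (hRD : ∀ x y : W, RD x y ↔ ¬ (x = w₀ ∧ y = w₀)) :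
    ∃ f : X → W, IsCdPMorphism R RD f := by
  have hirr : ¬ RD w₀ w₀ := by simp [hRD]
  have hmin : ∀ y, R y w₀ → y = w₀ := hT1 w₀ hirr
  let Q : W → W → Prop := fun v u => R v u ∧ u ≠ w₀
  have hQ : ∀ v, ∃ u, Q v u := by
    intro v
    by_cases hv : v = w₀
    · obtain ⟨y, hy, hRy⟩ := hDS w₀ hirr
      exact ⟨y, hv ▸ hRy, hy⟩
    · exact ⟨v, hF.refl v, hv⟩
  obtain ⟨x₀⟩ := ‹Nonempty X›
  choose nx hnU hnQ hnd hnc using Stage.exists_next (X := X) hzero hdii Q hQ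
  let σ₀ : Stage X W :=
    { U := univ, A := {x₀}, f := fun _ => w₀
      isOpen_U := isOpen_univ
      subset := subset_univ _
      noAcc := by
        intro x _
        by_cases h : x = x₀
        · exact Eventually.of_forall fun y hy => h ▸ hy
        · filter_upwards [isOpen_compl_singleton.mem_nhds h] with y hy hy'
          exact absurd hy' hy
      locConst := fun x _ => Eventually.of_forall fun _ => rfl }
  obtain ⟨T, hT0, hTs⟩ : ∃ T : ℕ → Stage X W, T 0 = σ₀ ∧ ∀ n, T (n + 1) = nx n (T n) :=
    ⟨fun n => Nat.rec σ₀ nx n, rfl, fun _ => rfl⟩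
  have hU0 : ∀ x, x ∈ (T 0).U := fun x => by rw [hT0]; exact mem_univ x
  have hTU : ∀ n, (T (n + 1)).U = (T n).U \ (T n).A := fun n => hTs n ▸ hnU n (T n)
  have hTQ : ∀ n x, Q ((T n).f x) ((T (n + 1)).f x) := fun n => hTs n ▸ hnQ n (T n)
  have hTd : ∀ n, ∀ x ∈ (T (n + 1)).U, ∃ a ∈ (T (n + 1)).A,
      (T (n + 1)).f a = (T (n + 1)).f x ∧ dist a x < 1 / ((n : ℝ) + 1) := fun n => hTs n ▸ hnd n (T n)
  have hTc : ∀ n, ∀ a ∈ (T n).A, ∀ u, Q ((T n).f a) u →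
      a ∈ closure ((T (n + 1)).A ∩ (T (n + 1)).f ⁻¹' {u}) := fun n => hTs n ▸ hnc n (T n)
  have hanti : Antitone fun n => (T n).U :=
    antitone_nat_of_succ_le fun n => by rw [hTU]; exact sdiff_subset
  have hmono : ∀ n m, n ≤ m → ∀ x, R ((T n).f x) ((T m).f x) := by
    intro n m h x
    induction m, h using Nat.le_induction with
    | base => exact hF.refl _
    | succ m _ ih => exact hF.trans ih (hTQ m x).1
  have hnotin : ∀ n m, n < m → ∀ x ∈ (T n).A, x ∉ (T m).U := by
    intro n m h x hx hxm
    have := hanti (Nat.succ_le_of_lt h) hxm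
    simp only [hTU] at this
    exact this.2 hx
  have hex : ∀ x, ∃ v, (∃ n, x ∈ (T n).A ∧ (T n).f x = v) ∨
      ((∀ n, x ∈ (T n).U) ∧ ∀ n, ∃ m ≥ n, (T m).f x = v) := by
    intro x
    by_cases h : ∃ n, x ∈ (T n).A
    · obtain ⟨n, hn⟩ := h
      exact ⟨_, Or.inl ⟨n, hn, rfl⟩⟩
    · push Not at h
      have hU : ∀ n, x ∈ (T n).U := by
        intro n
        induction n with
        | zero => exact hU0 x
        | succ n ih => rw [hTU]; exact ⟨ih, h n⟩
      obtain ⟨v, hv⟩ := Finite.exists_infinite_fiber (fun n => (T n).f x)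
      refine ⟨v, Or.inr ⟨hU, fun n => ?_⟩⟩
      obtain ⟨m, hm, hnm⟩ := (Set.infinite_coe_iff.1 hv).exists_gt n
      exact ⟨m, hnm.le, hm⟩
  choose F hFx using hex
  have hFA : ∀ n, ∀ x ∈ (T n).A, F x = (T n).f x := by
    intro n x hx
    rcases hFx x with ⟨m, hm, h⟩ | ⟨hU, -⟩
    · rcases lt_trichotomy n m with hlt | rfl | hlt
      · exact absurd ((T m).subset hm) (hnotin n m hlt x hx)
      · exact h.symm
      · exact absurd ((T n).subset hx) (hnotin m n hlt x hm)
    · exact absurd (hU (n + 1)) (hnotin n _ n.lt_succ_self x hx)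
  -- While `x` is unsettled at stage `n`, its final label is its label at some stage `m ≥ n`.
  have hlate : ∀ n, ∀ x ∈ (T n).U, ∃ m ≥ n, x ∈ (T m).U ∧ (T m).f x = F x := by
    intro n x hx
    rcases hFx x with ⟨m, hm, h⟩ | ⟨hU, h⟩
    · refine ⟨m, ?_, (T m).subset hm, h⟩
      by_contra! hlt
      exact hnotin m n hlt x hm hx
    · obtain ⟨m, hm, h⟩ := h n
      exact ⟨m, hm, hU m, h⟩
  have hnear : ∀ x, ∀ᶠ y in 𝓝 x, R (F x) (F y) := by
    intro x
    obtain ⟨n, -, hxn, hn⟩ := hlate 0 x (hU0 x)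
    filter_upwards [(T n).locConst x hxn, (T n).isOpen_U.mem_nhds hxn] with y hy hyU
    obtain ⟨m, hm, -, hmy⟩ := hlate n y hyU
    rw [← hn, ← hy, ← hmy]
    exact hmono n m hm y
  have hF0 : F x₀ = w₀ := by
    have h := hFA 0 x₀
    rw [hT0] at h
    exact h rfl
  have hFne : ∀ x, F x = w₀ → x = x₀ := by
    intro x hx
    by_contra hne
    have hx1 : x ∈ (T 1).U := by
      rw [← zero_add 1, hTU 0, hT0]
      exact ⟨mem_univ x, hne⟩
    obtain ⟨m, hm, -, h⟩ := hlate 1 x hx1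
    obtain ⟨k, rfl⟩ := Nat.exists_eq_add_of_le' hm
    exact (hTQ k x).2 (h.trans hx)
  have hclA : ∀ n, ∀ x ∈ (T n).A, ∀ u, Q (F x) u → x ∈ closure (F ⁻¹' {u}) := by
    intro n x hx u hu
    rw [hFA n x hx] at hu
    refine closure_mono ?_ (hTc n x hx u hu)
    rintro y ⟨hy, hyu⟩
    exact (hFA _ y hy).trans hyu
  have hcl : ∀ x u, R (F x) u → x ∈ closure (F ⁻¹' {u}) := by
    intro x u hu
    by_cases hu0 : u = w₀
    · subst hu0
      exact subset_closure (hmin _ hu)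
    rcases hFx x with ⟨n, hn, -⟩ | ⟨hU, h⟩
    · exact hclA n x hn u ⟨hu, hu0⟩
    · rw [← closure_closure, Metric.mem_closure_iff]
      intro ε hε
      obtain ⟨n, hn⟩ := exists_nat_one_div_lt hε
      obtain ⟨m, hm, hmx⟩ := h (n + 1)
      obtain ⟨k, rfl⟩ := Nat.exists_eq_add_of_le' (le_trans (Nat.le_add_left 1 n) hm)
      obtain ⟨a, ha, haf, had⟩ := hTd k x (hU _)
      refine ⟨a, hclA _ a ha u ⟨?_, hu0⟩, ?_⟩
      · rwa [hFA _ a ha, haf, hmx]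
      · have : 1 / ((k : ℝ) + 1) ≤ 1 / ((n : ℝ) + 1) := Nat.one_div_le_one_div (by omega)
        rw [dist_comm]
        linarith
  refine ⟨F, ⟨fun w => ?_, fun w => ?_, fun w => ?_⟩⟩
  · have h := hcl x₀ w (hF0 ▸ hroot w)
    exact closure_nonempty_iff.1 ⟨x₀, h⟩
  · ext x
    refine ⟨fun hx => ?_, fun hx => hcl x w hx⟩
    obtain ⟨y, hy, hyw⟩ := mem_closure_iff_nhds.1 hx _ (hnear x)
    exact (show F y = w from hyw) ▸ hy
  · ext x
    simp only [mem_ofPred_eq, mem_preimage, hRD]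
    constructor
    · rintro ⟨y, hyx, hy⟩ ⟨hx, rfl⟩
      exact hyx ((hFne y hy).trans (hFne x hx).symm)
    · intro h
      by_cases hw : w = w₀
      · exact ⟨x₀, fun hx => h ⟨hx ▸ hF0, hw⟩, hF0.trans hw.symm⟩
      · -- `x₀` is an accumulation point of the fibre over `w`, so that fibre is no singleton.
        by_contra! hno
        have h0 := hcl x₀ w (hF0 ▸ hroot w)
        have hsub : F ⁻¹' {w} ⊆ {x} := fun y hy => by
          by_contra hyx
          exact hno y hyx hy
        have hx0 : x₀ = x := by simpa using closure_mono hsub h0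
        obtain ⟨y, hy⟩ := closure_nonempty_iff.1 ⟨x₀, h0⟩
        have hyx : y = x := hsub hy
        apply hw
        rw [← hF0, hx0, ← hyx]
        exact (show F y = w from hy).symm
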